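/- arXiv:math/0101251 — 4 statements merged into one kernel-verified Lean document; each statement's English description precedes it below -/
import Mathlib

section
/- Let k ≥ 2 and let b₁,…,b_k be integers with b_i ≥ 2 for all i. Write the matrix product [[0,-1],[1,b_k]] ⋯ [[0,-1],[1,b₁]] as [[-γ,-δ],[α,β]]. Then 0 < γ, γ < α < β, and γ < δ < β. Moreover β + γ − α − δ ≥ 0, with equality if and only if b₁ = b₂ = ⋯ = b_k = 2. -/
/-- The matrix `[[0,-1],[1,x]]`. -/
def Mb (x : ℤ) : Matrix (Fin 2) (Fin 2) ℤ := !![0, -1; 1, x]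

/-- The product `[[0,-1],[1,b_k]] ⋯ [[0,-1],[1,b₁]]` for a list `[b₁,…,b_k]`. -/
def prodB (L : List ℤ) : Matrix (Fin 2) (Fin 2) ℤ := ((L.map Mb).reverse).prod

theorem prodB_cons (a : ℤ) (L : List ℤ) : prodB (a :: L) = prodB L * Mb a := by
  simp [prodB]

/-- Entries of `prodB` after prepending `a`, in terms of the previous entries. -/
theorem prodB_cons_apply (a : ℤ) (L : List ℤ) :
    prodB (a :: L) 0 0 = prodB L 0 1 ∧
    prodB (a :: L) 0 1 = -prodB L 0 0 + a * prodB L 0 1 ∧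
    prodB (a :: L) 1 0 = prodB L 1 1 ∧
    prodB (a :: L) 1 1 = -prodB L 1 0 + a * prodB L 1 1 := by
  simp [prodB_cons, Mb, Matrix.mul_apply, Fin.sum_univ_two, mul_comm]

/-- The inequalities that hold for lists of any length, including the empty one; only the
positivity of `-prodB L 0 0` needs at least two factors. -/
theorem prodB_inequalities (L : List ℤ) (hL : ∀ x ∈ L, 2 ≤ x) :
    prodB L 0 1 ≤ 0 ∧ -prodB L 0 0 < prodB L 1 0 ∧ prodB L 1 0 < prodB L 1 1 ∧
    -prodB L 0 0 < -prodB L 0 1 ∧ -prodB L 0 1 < prodB L 1 1 ∧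
    0 ≤ prodB L 1 1 + -prodB L 0 0 - prodB L 1 0 - -prodB L 0 1 ∧
    (prodB L 1 1 + -prodB L 0 0 - prodB L 1 0 - -prodB L 0 1 = 0 ↔ ∀ x ∈ L, x = 2) := by
  induction L with
  | nil => simp [prodB]
  | cons a L ih =>
    rw [List.forall_mem_cons] at hL
    obtain ⟨ha, hL⟩ := hL
    obtain ⟨hδ, hγα, hαβ, hγδ, hδβ, hS, hS0⟩ := ih hL
    obtain ⟨h00, h01, h10, h11⟩ := prodB_cons_apply a L
    rw [List.forall_mem_cons, ← hS0, h00, h01, h10, h11]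
    generalize prodB L 0 0 = p at *
    generalize prodB L 0 1 = q at *
    generalize prodB L 1 0 = r at *
    generalize prodB L 1 1 = s at *
    have hprod : 0 ≤ (a - 2) * (s + q) := mul_nonneg (by linarith) (by linarith)
    have hq : 0 ≤ (a - 2) * -q := mul_nonneg (by linarith) (by linarith)
    have hs : 0 ≤ (a - 2) * s := mul_nonneg (by linarith) (by linarith)
    refine ⟨by linarith, by linarith, by linarith, by linarith, by linarith, by linarith, ?_⟩
    constructor
    · intro h
      have hzero : (a - 2) * (s + q) = 0 := by linarith
      refine ⟨?_, by linarith⟩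
      rcases mul_eq_zero.mp hzero with h | h <;> linarith
    · rintro ⟨rfl, h⟩
      linarith

theorem stmt_2 (k : ℕ) (hk : 2 ≤ k) (b : Fin k → ℤ) (hb : ∀ i, 2 ≤ b i) :
    let P := prodB (List.ofFn b)
    let α := P 1 0
    let β := P 1 1
    let γ := -P 0 0
    let δ := -P 0 1
    0 < γ ∧ γ < α ∧ α < β ∧ γ < δ ∧ δ < β ∧
    0 ≤ β + γ - α - δ ∧ (β + γ - α - δ = 0 ↔ ∀ i, b i = 2) := by
  obtain ⟨n, rfl⟩ := Nat.exists_eq_add_of_le' hk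
  intro P α β γ δ
  obtain ⟨-, h1, h2, h3, h4, h5, h6⟩ :=
    prodB_inequalities (List.ofFn b) (List.forall_mem_ofFn_iff.mpr hb)
  refine ⟨?_, h1, h2, h3, h4, h5, h6.trans List.forall_mem_ofFn_iff⟩
  have htail : ∀ x ∈ List.ofFn (fun i : Fin n => b i.succ.succ), 2 ≤ x :=
    List.forall_mem_ofFn_iff.mpr fun i => hb _
  have hδ := (prodB_inequalities _ htail).1
  obtain ⟨-, -, -, hγδ, -⟩ := prodB_inequalities (b (Fin.succ 0) :: _)
    (List.forall_mem_cons.mpr ⟨hb _, htail⟩)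
  rw [(prodB_cons_apply _ _).1] at hγδ
  change 0 < -prodB (List.ofFn b) 0 0
  rw [List.ofFn_succ, List.ofFn_succ, (prodB_cons_apply _ _).1]
  linarith
end

section
/- Let a, b, c, d be positive integers with ad − bc = 1. Then there exist k ≥ 2 and integers e₁,…,e_k with e_i ≥ 2 for all i and e_j ≥ 3 for at least one j, such that B(e₁−1, e₂, …, e_{k−1}, e_k−1) = [[a,b],[c,d]]. -/
/-- `B(b₁,…,b_k) = [[0,1],[-1,0]] · [[0,-1],[1,b_k]] ⋯ [[0,-1],[1,b₁]]`. -/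
def Bmat (L : List ℤ) : Matrix (Fin 2) (Fin 2) ℤ := !![0, 1; -1, 0] * prodB L

/-- The list `e₁-1, e₂, …, e_{k-1}, e_k-1`. -/
def cuspList (k : ℕ) (e : Fin k → ℤ) : List ℤ :=
  List.ofFn fun i => e i - (if i.val = 0 ∨ i.val = k - 1 then 1 else 0)

theorem prodB_append_singleton (L : List ℤ) (y : ℤ) :
    prodB (L ++ [y]) = Mb y * prodB L := by
  simp [prodB]

/-- Incrementing the last entry of the list multiplies `Bmat` on the left by `[[1,1],[0,1]]`. -/
theorem Bmat_append_add_one (L : List ℤ) (y : ℤ) :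
    Bmat (L ++ [y + 1]) = !![1, 1; 0, 1] * Bmat (L ++ [y]) := by
  simp only [Bmat, prodB_append_singleton, ← mul_assoc]
  congr 1
  simp [Mb, add_comm]

/-- Incrementing the last entry of the list and then appending `1` multiplies `Bmat` on the left
by `[[1,0],[1,1]]`. -/
theorem Bmat_append_add_one_append_one (L : List ℤ) (y : ℤ) :
    Bmat (L ++ [y + 1] ++ [1]) = !![1, 0; 1, 1] * Bmat (L ++ [y]) := by
  simp only [Bmat, prodB_append_singleton, ← mul_assoc]
  congr 1
  simp [Mb, add_comm]

theorem Bmat_pair (x y : ℤ) : Bmat [x, y] = !![y, y * x - 1; 1, x] := by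
  simp [Bmat, prodB, Mb]
  ring

/-- A matrix of determinant one with `a, c, d` positive and `b` nonnegative is a `Bmat`, by the
Euclidean algorithm on its rows. -/
theorem exists_Bmat_eq (n : ℕ) (a b c d : ℤ) (hn : a + c ≤ n) (ha : 0 < a) (hb : 0 ≤ b)
    (hc : 0 < c) (hd : 0 < d) (hdet : a * d - b * c = 1) :
    ∃ (x y : ℤ) (l : List ℤ), 1 ≤ x ∧ 1 ≤ y ∧ (∀ z ∈ l, 2 ≤ z) ∧
      (0 < b → 2 ≤ x ∨ 2 ≤ y ∨ ∃ z ∈ l, 3 ≤ z) ∧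
      Bmat (x :: l ++ [y]) = !![a, b; c, d] := by
  induction n generalizing a b c d with
  | zero => push_cast at hn; omega
  | succ n ih =>
    push_cast at hn
    obtain rfl | hc1 : c = 1 ∨ 2 ≤ c := by omega
    · obtain rfl : b = a * d - 1 := by linarith
      refine ⟨d, a, [], hd, ha, by simp, fun h => ?_, Bmat_pair d a⟩
      by_contra! H
      obtain rfl : d = 1 := by omega
      obtain rfl : a = 1 := by omega
      omega
    · rcases lt_trichotomy a c with h | rfl | h
      · have hdb : 0 < d - b := by nlinarith [mul_nonneg hb (sub_pos.2 h).le]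
        obtain ⟨x, y, l, hx, hy, hl, hbig, hB⟩ :=
          ih a b (c - a) (d - b) (by omega) ha hb (by omega) hdb (by linarith)
        refine ⟨x, 1, l ++ [y + 1], hx, le_rfl, ?_, fun hb0 => ?_, ?_⟩
        · intro z hz
          rcases List.mem_append.1 hz with hz | hz
          · exact hl z hz
          · rw [List.mem_singleton.1 hz]; omega
        · rcases hbig hb0 with h2 | h2 | ⟨z, hz, h3⟩
          · exact Or.inl h2
          · exact Or.inr (Or.inr ⟨y + 1, by simp, by omega⟩)
          · exact Or.inr (Or.inr ⟨z, by simp [hz], h3⟩)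
        · rw [← List.cons_append, Bmat_append_add_one_append_one, hB]
          simp
      · have : a ∣ 1 := ⟨d - b, by linarith⟩
        have := Int.le_of_dvd one_pos this
        omega
      · have hbd : 0 ≤ b - d := by
          by_contra! hlt
          nlinarith [mul_pos (sub_pos.2 h) hd, mul_pos (neg_pos.2 hlt) hc]
        obtain ⟨x, y, l, hx, hy, hl, -, hB⟩ :=
          ih (a - c) (b - d) c d (by omega) (by omega) hbd hc hd (by linarith)
        refine ⟨x, y + 1, l, hx, by omega, hl, fun _ => Or.inr (Or.inl (by omega)), ?_⟩
        rw [Bmat_append_add_one, hB]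
        simp

theorem cuspList_get (x y : ℤ) (l : List ℤ) :
    cuspList _ ((x + 1) :: l ++ [y + 1]).get = x :: l ++ [y] := by
  apply List.ext_getElem
  · simp [cuspList]
  · intro i h₁ h₂
    simp only [cuspList, List.getElem_ofFn, List.get_eq_getElem]
    rcases i with _ | i
    · simp
    · simp only [List.cons_append, List.length_cons, List.length_append, List.length_nil] at h₂
      by_cases hi : i < l.length
      · simp [List.getElem_append_left hi, hi.ne]
      · obtain rfl : i = l.length := by omega
        simp

theorem stmt_3 (a b c d : ℤ) (ha : 0 < a) (hb : 0 < b) (hc : 0 < c) (hd : 0 < d)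
    (hdet : a * d - b * c = 1) :
    ∃ (k : ℕ) (e : Fin k → ℤ), 2 ≤ k ∧ (∀ i, 2 ≤ e i) ∧ (∃ j, 3 ≤ e j) ∧
      Bmat (cuspList k e) = !![a, b; c, d] := by
  obtain ⟨x, y, l, hx, hy, hl, hbig, hB⟩ :=
    exists_Bmat_eq (a + c).toNat a b c d (Int.self_le_toNat _) ha hb.le hc hd hdet
  refine ⟨_, ((x + 1) :: l ++ [y + 1]).get, by simp, fun i => ?_, ?_, by rw [cuspList_get, hB]⟩
  · have hmem := List.get_mem ((x + 1) :: l ++ [y + 1]) i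
    generalize ((x + 1) :: l ++ [y + 1]).get i = z at hmem ⊢
    simp only [List.cons_append, List.mem_cons, List.mem_append, List.not_mem_nil,
      or_false] at hmem
    rcases hmem with rfl | hz | rfl
    · omega
    · exact hl z hz
    · omega
  · obtain ⟨z, hz, h3⟩ : ∃ z ∈ (x + 1) :: l ++ [y + 1], 3 ≤ z := by
      rcases hbig hb with h | h | ⟨z, hz, h⟩
      · exact ⟨x + 1, by simp, by omega⟩
      · exact ⟨y + 1, by simp, by omega⟩
      · exact ⟨z, by simp [hz], h⟩
    obtain ⟨j, rfl⟩ := List.get_of_mem hz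
    exact ⟨j, h3⟩
end

section
/- In the presented group π below, the relations x₁² = x₂^{2d} y₂^{−c} and y₁ = x₂^{−2b} y₂^{a} hold. -/
/-- The relators of the fundamental group
`⟨x₁,y₁,x₂,y₂ | x₁⁻¹y₁x₁ = y₁⁻¹, x₂⁻¹y₂x₂ = y₂⁻¹, x₂² = x₁^{2a}y₁^{c}, y₂ = x₁^{2b}y₁^{d}⟩`
of the link of the quotient-cusp classified by `[[a,b],[c,d]]`.
The generators `x₁, y₁, x₂, y₂` are indexed by `0, 1, 2, 3 : Fin 4`. -/
def quotientCuspRels (a b c d : ℕ) : Set (FreeGroup (Fin 4)) :=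
  { (FreeGroup.of 0)⁻¹ * FreeGroup.of 1 * FreeGroup.of 0 * FreeGroup.of 1,
    (FreeGroup.of 2)⁻¹ * FreeGroup.of 3 * FreeGroup.of 2 * FreeGroup.of 3,
    (FreeGroup.of 2) ^ 2 * ((FreeGroup.of 0) ^ (2 * a) * (FreeGroup.of 1) ^ c)⁻¹,
    FreeGroup.of 3 * ((FreeGroup.of 0) ^ (2 * b) * (FreeGroup.of 1) ^ d)⁻¹ }

theorem Commute.eq_mul_inv_of_unimodular {G : Type*} [Group G] {u v : G} (h : Commute u v)
    {a b c d : ℕ} (hdet : a * d = b * c + 1) :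
    u = (u ^ a * v ^ c) ^ d * ((u ^ b * v ^ d) ^ c)⁻¹ := by
  rw [(h.pow_pow a c).mul_pow, (h.pow_pow b d).mul_pow, eq_mul_inv_iff_mul_eq, ← pow_mul,
    ← pow_mul, ← pow_mul, ← pow_mul, hdet, pow_succ', mul_comm d c, mul_assoc]

theorem Commute.eq_inv_mul_of_unimodular {G : Type*} [Group G] {u v : G} (h : Commute u v)
    {a b c d : ℕ} (hdet : a * d = b * c + 1) :
    v = ((u ^ a * v ^ c) ^ b)⁻¹ * (u ^ b * v ^ d) ^ a := by
  rw [(h.pow_pow a c).mul_pow, (h.pow_pow b d).mul_pow, eq_inv_mul_iff_mul_eq, ← pow_mul,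
    ← pow_mul, ← pow_mul, ← pow_mul, mul_comm d a, hdet, pow_succ, mul_comm c b, mul_comm b a,
    mul_assoc]

theorem commute_sq_left_of_conj_eq_inv {G : Type*} [Group G] {x y : G}
    (h : x⁻¹ * y * x * y = 1) : Commute (x ^ 2) y := by
  have hxy : y * x = x * y⁻¹ := by
    rw [mul_eq_one_iff_eq_inv, mul_assoc, inv_mul_eq_iff_eq_mul] at h
    exact h
  have hyx : y⁻¹ * x = x * y := by
    rw [inv_mul_eq_iff_eq_mul, ← mul_assoc, hxy, inv_mul_cancel_right]
  change x ^ 2 * y = y * x ^ 2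
  rw [sq, ← mul_assoc, hxy, mul_assoc, mul_assoc, hyx]

theorem stmt_10 (a b c d : ℕ) (ha : 0 < a) (hb : 0 < b) (hc : 0 < c) (hd : 0 < d)
    (hdet : a * d = b * c + 1) :
    ((PresentedGroup.of 0 : PresentedGroup (quotientCuspRels a b c d)) ^ 2 =
        (PresentedGroup.of 2) ^ (2 * d) * ((PresentedGroup.of 3) ^ c)⁻¹) ∧
      ((PresentedGroup.of 1 : PresentedGroup (quotientCuspRels a b c d)) =
        ((PresentedGroup.of 2) ^ (2 * b))⁻¹ * (PresentedGroup.of 3) ^ a) := by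
  have hrel : ∀ r ∈ quotientCuspRels a b c d,
      PresentedGroup.mk (quotientCuspRels a b c d) r = 1 :=
    fun r hr ↦ PresentedGroup.one_of_mem hr
  have hconj := hrel _ (Or.inl rfl)
  have hx := hrel _ (Or.inr (Or.inr (Or.inl rfl)))
  have hy := hrel _ (Or.inr (Or.inr (Or.inr rfl)))
  simp only [map_mul, map_inv, map_pow] at hconj hx hy
  rw [mul_inv_eq_one, pow_mul] at hx hy
  have hcomm := commute_sq_left_of_conj_eq_inv hconj
  have hu := hcomm.eq_mul_inv_of_unimodular hdet
  have hv := hcomm.eq_inv_mul_of_unimodular hdet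
  rw [← hx, ← hy, ← pow_mul] at hu hv
  exact ⟨hu, hv⟩
end

section
/- Suppose c is even. Then S₁^{−d} T^{c/2} S₃ = diag(−1, 1, −1, 1), the group G is isomorphic to the product of cyclic groups C_{4b} × C₂ × C₂ (with the three factors generated by S₁, T, and diag(−1,1,−1,1)), and the non-identity elements of G having at least two diagonal entries equal to 1 are exactly the six diagonal matrices whose diagonal entries are ±1 with exactly two entries equal to 1 and two equal to −1. -/
/-- The inclusion of invertible diagonal matrices, as a group homomorphism. -/
def diagonalUnits : (Fin 4 → ℂ)ˣ →* (Matrix (Fin 4) (Fin 4) ℂ)ˣ :=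
  Units.map (Matrix.diagonalRingHom (Fin 4) ℂ).toMonoidHom

lemma coe_diagonalUnits (s : (Fin 4 → ℂ)ˣ) :
    (diagonalUnits s : Matrix (Fin 4) (Fin 4) ℂ) = Matrix.diagonal (s : Fin 4 → ℂ) := rfl

lemma diagonalUnits_injective : Function.Injective diagonalUnits :=
  Units.map_injective Matrix.diagonal_injective

lemma exists_diagonalUnits_eq {S : (Matrix (Fin 4) (Fin 4) ℂ)ˣ} {v : Fin 4 → ℂ}
    (hS : (S : Matrix (Fin 4) (Fin 4) ℂ) = Matrix.diagonal v) :
    ∃ s : (Fin 4 → ℂ)ˣ, (s : Fin 4 → ℂ) = v ∧ diagonalUnits s = S := by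
  have hv : IsUnit v := by
    rw [← Matrix.isUnit_diagonal, ← hS]
    exact S.isUnit
  obtain ⟨s, rfl⟩ := hv
  exact ⟨s, rfl, Units.ext hS.symm⟩

lemma exists_zmod_hom {H : Type*} [CommGroup H] {n : ℕ} {x : H} (hx : x ^ n = 1) :
    ∃ f : Multiplicative (ZMod n) →* H,
      ∀ k : ℕ, f (Multiplicative.ofAdd (k : ZMod n)) = x ^ k := by
  refine ⟨AddMonoidHom.toMultiplicativeLeft (ZMod.lift n ⟨zmultiplesHom (Additive H)
    (Additive.ofMul x), ?_⟩), fun k => ?_⟩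
  · simp [← ofMul_pow, hx]
  · have h := ZMod.lift_coe n (⟨zmultiplesHom (Additive H) (Additive.ofMul x), by
      simp [← ofMul_pow, hx]⟩ : {f : ℤ →+ Additive H // f n = 0}) (k : ℤ)
    simp only [Int.cast_natCast] at h
    simp [h, ← ofMul_pow]

lemma exists_zmod_prod_hom {H : Type*} [CommGroup H] {n : ℕ} {x y z : H}
    (hx : x ^ n = 1) (hy : y ^ 2 = 1) (hz : z ^ 2 = 1) :
    ∃ f : Multiplicative (ZMod n) × Multiplicative (ZMod 2) × Multiplicative (ZMod 2) →* H,
      ∀ k e j : ℕ, f (Multiplicative.ofAdd (k : ZMod n), Multiplicative.ofAdd (e : ZMod 2),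
        Multiplicative.ofAdd (j : ZMod 2)) = x ^ k * y ^ e * z ^ j := by
  obtain ⟨f, hf⟩ := exists_zmod_hom hx
  obtain ⟨g, hg⟩ := exists_zmod_hom hy
  obtain ⟨h, hh⟩ := exists_zmod_hom hz
  exact ⟨f.coprod (g.coprod h), fun k e j => by simp [hf, hg, hh, mul_assoc]⟩

lemma exists_natCast_triple {n : ℕ} [NeZero n]
    (p : Multiplicative (ZMod n) × Multiplicative (ZMod 2) × Multiplicative (ZMod 2)) :
    ∃ k e j : ℕ, p = (Multiplicative.ofAdd (k : ZMod n), Multiplicative.ofAdd (e : ZMod 2),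
      Multiplicative.ofAdd (j : ZMod 2)) := by
  obtain ⟨p, q, r⟩ := p
  exact ⟨p.toAdd.val, q.toAdd.val, r.toAdd.val, by simp⟩

theorem stmt_16 (a b c d : ℕ) (ha : 0 < a) (hb : 0 < b) (hc : 0 < c) (hd : 0 < d)
    (hdet : a * d = b * c + 1) (hceven : Even c)
    (ω : ℂ) (hω : IsPrimitiveRoot ω (4 * b))
    (S₁ S₂ S₃ S₄ : (Matrix (Fin 4) (Fin 4) ℂ)ˣ)
    (hS₁ : (S₁ : Matrix (Fin 4) (Fin 4) ℂ) = Matrix.diagonal ![-ω ^ a, ω ^ a, ω, ω])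
    (hS₂ : (S₂ : Matrix (Fin 4) (Fin 4) ℂ) = Matrix.diagonal ![ω ^ a, -ω ^ a, ω, ω])
    (hS₃ : (S₃ : Matrix (Fin 4) (Fin 4) ℂ) = Matrix.diagonal ![ω, ω, -ω ^ d, ω ^ d])
    (hS₄ : (S₄ : Matrix (Fin 4) (Fin 4) ℂ) = Matrix.diagonal ![ω, ω, ω ^ d, -ω ^ d]) :
    (((S₁ ^ d)⁻¹ * (S₁ * S₂⁻¹) ^ (c / 2) * S₃ : (Matrix (Fin 4) (Fin 4) ℂ)ˣ) :
        Matrix (Fin 4) (Fin 4) ℂ) = Matrix.diagonal ![-1, 1, -1, 1] ∧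
    (∃ φ : Multiplicative (ZMod (4 * b)) × Multiplicative (ZMod 2) × Multiplicative (ZMod 2) ≃*
        (Subgroup.closure {S₁, S₂, S₃, S₄} : Subgroup (Matrix (Fin 4) (Fin 4) ℂ)ˣ),
      ((φ (Multiplicative.ofAdd 1, 1, 1) : (Matrix (Fin 4) (Fin 4) ℂ)ˣ) = S₁) ∧
      ((φ (1, Multiplicative.ofAdd 1, 1) : (Matrix (Fin 4) (Fin 4) ℂ)ˣ) = S₁ * S₂⁻¹) ∧
      ((φ (1, 1, Multiplicative.ofAdd 1) : (Matrix (Fin 4) (Fin 4) ℂ)ˣ) =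
        (S₁ ^ d)⁻¹ * (S₁ * S₂⁻¹) ^ (c / 2) * S₃)) ∧
    ({m : Matrix (Fin 4) (Fin 4) ℂ | ∃ g ∈ Subgroup.closure {S₁, S₂, S₃, S₄}, g ≠ 1 ∧
        (∃ i j : Fin 4, i ≠ j ∧ (g : Matrix (Fin 4) (Fin 4) ℂ) i i = 1 ∧
          (g : Matrix (Fin 4) (Fin 4) ℂ) j j = 1) ∧ (g : Matrix (Fin 4) (Fin 4) ℂ) = m} =
      {Matrix.diagonal ![-1, -1, 1, 1], Matrix.diagonal ![1, 1, -1, -1],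
        Matrix.diagonal ![-1, 1, -1, 1], Matrix.diagonal ![1, -1, 1, -1],
        Matrix.diagonal ![-1, 1, 1, -1], Matrix.diagonal ![1, -1, -1, 1]}) := by
  have hodd : Odd (a * d) := hdet ▸ (hceven.mul_left b).add_one
  obtain ⟨haodd, hdodd⟩ := Nat.odd_mul.mp hodd
  have hcop : Nat.Coprime (2 * b) a := by
    refine Nat.Coprime.mul_left (Nat.coprime_two_left.mpr haodd) ?_
    refine Nat.isCoprime_iff_coprime.mp ⟨-c, d, ?_⟩
    have : (a : ℤ) * d = b * c + 1 := by exact_mod_cast hdet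
    linarith
  have hω2b : ω ^ (2 * b) = -1 :=
    (hω.pow (n := 4 * b) (a := 2 * b) (b := 2) (by omega) (by ring)).eq_neg_one_of_two_right
  obtain ⟨m, hm⟩ := hceven.two_dvd
  have hm2 : c / 2 = m := by omega
  have hωad : ω ^ (a * d) = (-1) ^ m * ω := by
    rw [hdet, hm, pow_succ, ← hω2b, ← pow_mul]; ring_nf
  obtain ⟨x, hx, rfl⟩ := exists_diagonalUnits_eq hS₁
  obtain ⟨x₂, hx₂, rfl⟩ := exists_diagonalUnits_eq hS₂
  obtain ⟨x₃, hx₃, rfl⟩ := exists_diagonalUnits_eq hS₃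
  obtain ⟨x₄, hx₄, rfl⟩ := exists_diagonalUnits_eq hS₄
  obtain ⟨t, ht⟩ : IsUnit (![-1, -1, 1, 1] : Fin 4 → ℂ) := by
    rw [Pi.isUnit_iff]; intro i; fin_cases i <;> simp
  obtain ⟨u, hu⟩ : IsUnit (![-1, 1, -1, 1] : Fin 4 → ℂ) := by
    rw [Pi.isUnit_iff]; intro i; fin_cases i <;> simp
  have htx : x * x₂⁻¹ = t := by
    rw [mul_inv_eq_iff_eq_mul]
    ext i; fin_cases i <;> simp [hx, hx₂, ht]
  have hux : (x ^ d)⁻¹ * t ^ m * x₃ = u := by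
    rw [mul_assoc, inv_mul_eq_iff_eq_mul]
    ext i
    fin_cases i <;> simp [hx, hx₃, ht, hu, hdodd.neg_pow, ← pow_mul, hωad]
  have hw : ((x ^ (2 * b) : (Fin 4 → ℂ)ˣ) : Fin 4 → ℂ) = ![-1, -1, -1, -1] := by
    have : (ω ^ a) ^ (2 * b) = -1 := by rw [pow_right_comm, hω2b, haodd.neg_one_pow]
    ext i
    fin_cases i <;> simp [hx, hω2b, this, (even_two_mul b).neg_pow]
  have hx4 : x₄ = x ^ (2 * b) * t * x₃ := by
    ext i
    simp only [Units.val_mul, hw, hx₃, hx₄, ht]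
    fin_cases i <;> simp
  have hxo : x ^ (4 * b) = 1 := by
    rw [show 4 * b = 2 * b * 2 by ring, pow_mul]
    ext i
    rw [Units.val_pow_eq_pow_val, hw]
    fin_cases i <;> simp
  have hto : t ^ 2 = 1 := by ext i; fin_cases i <;> simp [ht]
  have huo : u ^ 2 = 1 := by ext i; fin_cases i <;> simp [hu]
  have hval (k e j : ℕ) : ((x ^ k * t ^ e * u ^ j : (Fin 4 → ℂ)ˣ) : Fin 4 → ℂ) =
      ![(-ω ^ a) ^ k * (-1) ^ e * (-1) ^ j, (ω ^ a) ^ k * (-1) ^ e, ω ^ k * (-1) ^ j, ω ^ k] := by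
    ext i; fin_cases i <;> simp [hx, ht, hu]
  obtain ⟨f, hf⟩ := exists_zmod_prod_hom hxo hto huo
  have : NeZero (4 * b) := ⟨by omega⟩
  have hfinj : Function.Injective f := by
    rw [injective_iff_map_eq_one]
    intro p hp
    obtain ⟨k, e, j, rfl⟩ := exists_natCast_triple p
    rw [hf] at hp
    have hv := hval k e j
    rw [hp] at hv
    have h3 : ω ^ k = 1 := by simpa using (congrFun hv 3).symm
    have h2 : (-1 : ℂ) ^ j = 1 := by simpa [h3] using (congrFun hv 2).symm
    have h1 : (-1 : ℂ) ^ e = 1 := by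
      simpa [pow_right_comm ω a k, h3] using (congrFun hv 1).symm
    rw [neg_one_pow_eq_one_iff_even (by norm_num)] at h1 h2
    rw [(ZMod.natCast_eq_zero_iff k (4 * b)).mpr (hω.dvd_of_pow_eq_one k h3),
      (ZMod.natCast_eq_zero_iff e 2).mpr h1.two_dvd, (ZMod.natCast_eq_zero_iff j 2).mpr h2.two_dvd]
    rfl
  have hrange : (diagonalUnits.comp f).range = Subgroup.closure
      {diagonalUnits x, diagonalUnits x₂, diagonalUnits x₃, diagonalUnits x₄} := by
    apply le_antisymm
    · rintro _ ⟨p, rfl⟩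
      obtain ⟨k, e, j, rfl⟩ := exists_natCast_triple p
      have m1 : diagonalUnits x ∈ Subgroup.closure
          {diagonalUnits x, diagonalUnits x₂, diagonalUnits x₃, diagonalUnits x₄} :=
        Subgroup.subset_closure (by simp)
      have m2 : diagonalUnits x₂ ∈ Subgroup.closure
          {diagonalUnits x, diagonalUnits x₂, diagonalUnits x₃, diagonalUnits x₄} :=
        Subgroup.subset_closure (by simp)
      have m3 : diagonalUnits x₃ ∈ Subgroup.closure
          {diagonalUnits x, diagonalUnits x₂, diagonalUnits x₃, diagonalUnits x₄} :=
        Subgroup.subset_closure (by simp)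
      have mt := mul_mem m1 (inv_mem m2)
      have mu := mul_mem (mul_mem (inv_mem (pow_mem m1 d)) (pow_mem mt m)) m3
      rw [← map_inv, ← map_mul, htx] at mt
      rw [← map_inv, ← map_mul, htx, ← map_pow, ← map_pow, ← map_inv, ← map_mul, ← map_mul,
        hux] at mu
      rw [MonoidHom.comp_apply, hf, map_mul, map_mul, map_pow, map_pow, map_pow]
      exact mul_mem (mul_mem (pow_mem m1 k) (pow_mem mt e)) (pow_mem mu j)
    · have mx : x ∈ f.range := ⟨_, (hf 1 0 0).trans (by simp)⟩
      have mt : t ∈ f.range := ⟨_, (hf 0 1 0).trans (by simp)⟩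
      have mu : u ∈ f.range := ⟨_, (hf 0 0 1).trans (by simp)⟩
      have m2 : x₂ ∈ f.range := by
        rw [show x₂ = t⁻¹ * x by rw [← htx]; simp]
        exact mul_mem (inv_mem mt) mx
      have m3 : x₃ ∈ f.range := by
        rw [show x₃ = (t ^ m)⁻¹ * (x ^ d * u) by rw [← hux]; group]
        exact mul_mem (inv_mem (pow_mem mt m)) (mul_mem (pow_mem mx d) mu)
      have m4 : x₄ ∈ f.range := by
        rw [hx4]
        exact mul_mem (mul_mem (pow_mem mx _) mt) m3
      rw [Subgroup.closure_le, MonoidHom.range_comp]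
      rintro _ (rfl | rfl | rfl | rfl)
      exacts [⟨_, mx, rfl⟩, ⟨_, m2, rfl⟩, ⟨_, m3, rfl⟩, ⟨_, m4, rfl⟩]
  have htS : diagonalUnits x * (diagonalUnits x₂)⁻¹ = diagonalUnits t := by
    rw [← map_inv, ← map_mul, htx]
  have huS : (diagonalUnits x ^ d)⁻¹ * diagonalUnits t ^ m * diagonalUnits x₃ =
      diagonalUnits u := by
    simp only [← map_pow, ← map_inv, ← map_mul, hux]
  rw [htS, hm2, huS]
  refine ⟨by rw [coe_diagonalUnits, hu], ?_, ?_⟩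
  · refine ⟨(MonoidHom.ofInjective (f := diagonalUnits.comp f)
      (diagonalUnits_injective.comp hfinj)).trans (MulEquiv.subgroupCongr hrange), ?_, ?_, ?_⟩
    · change diagonalUnits (f _) = _
      simpa using congrArg diagonalUnits (hf 1 0 0)
    · change diagonalUnits (f _) = _
      simpa using congrArg diagonalUnits (hf 0 1 0)
    · change diagonalUnits (f _) = _
      simpa using congrArg diagonalUnits (hf 0 0 1)
  · rw [← hrange]
    ext M
    constructor
    · rintro ⟨_, ⟨p, rfl⟩, hne, ⟨i, -, -, hi, -⟩, rfl⟩
      obtain ⟨k, e, j, rfl⟩ := exists_natCast_triple p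
      rw [MonoidHom.comp_apply, hf] at hne hi ⊢
      rw [coe_diagonalUnits, hval] at hi ⊢
      rw [Matrix.diagonal_apply_eq] at hi
      have hne' : ![(-ω ^ a) ^ k * (-1) ^ e * (-1) ^ j, (ω ^ a) ^ k * (-1) ^ e,
          ω ^ k * (-1) ^ j, ω ^ k] ≠ 1 := by
        rw [← hval]
        intro h
        exact hne ((map_eq_one_iff _ diagonalUnits_injective).mpr (Units.ext h))
      have hk : 2 * b ∣ k := by
        have hsq : (ω ^ (a * k)) ^ 2 = 1 ∨ (ω ^ k) ^ 2 = 1 := by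
          have hs (n : ℕ) : ((-1 : ℂ) ^ n) ^ 2 = 1 := by rw [pow_right_comm]; simp
          have h := congrArg (· ^ 2) hi
          rw [pow_mul]
          fin_cases i
          · left; simpa [mul_pow, hs, neg_pow (ω ^ a) k] using h
          · left; simpa [mul_pow, hs] using h
          · right; simpa [mul_pow, hs] using h
          · right; simpa [mul_pow, hs] using h
        rcases hsq with h | h
        · rw [← pow_mul] at h
          have := hω.dvd_of_pow_eq_one _ h
          rw [show 4 * b = 2 * b * 2 by ring] at this
          exact hcop.dvd_of_dvd_mul_left (Nat.dvd_of_mul_dvd_mul_right two_pos this)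
        · rw [← pow_mul] at h
          have := hω.dvd_of_pow_eq_one _ h
          rw [show 4 * b = 2 * b * 2 by ring] at this
          exact Nat.dvd_of_mul_dvd_mul_right two_pos this
      have hkeven : Even k := even_iff_two_dvd.mpr ((Dvd.intro b rfl).trans hk)
      have hωk : ω ^ k = 1 ∨ ω ^ k = -1 := by
        obtain ⟨l, rfl⟩ := hk
        rw [pow_mul, hω2b]
        exact neg_one_pow_eq_or ℂ l
      have hωak : (ω ^ a) ^ k = ω ^ k := by
        rw [pow_right_comm]
        rcases hωk with h | h <;> simp [h, haodd.neg_one_pow]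
      rw [hkeven.neg_pow, hωak] at hi hne' ⊢
      rcases hωk with h | h <;> rcases neg_one_pow_eq_or ℂ e with he | he <;>
        rcases neg_one_pow_eq_or ℂ j with hj | hj <;>
        simp only [h, he, hj, mul_one, mul_neg, neg_neg] at hi hne' ⊢
      · exact absurd (by ext l; fin_cases l <;> rfl) hne'
      · simp
      · simp
      · simp
      · fin_cases i <;> norm_num at hi
      · simp
      · simp
      · simp
    · have hmem (k e j : ℕ) (v : Fin 4 → ℂ)
          (hv : ((x ^ k * t ^ e * u ^ j : (Fin 4 → ℂ)ˣ) : Fin 4 → ℂ) = v) (i i' : Fin 4)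
          (hii' : i ≠ i') (hi : v i = 1) (hi' : v i' = 1) (l : Fin 4) (hl : v l = -1) :
          ∃ g ∈ (diagonalUnits.comp f).range, g ≠ 1 ∧
            (∃ i j : Fin 4, i ≠ j ∧ (g : Matrix (Fin 4) (Fin 4) ℂ) i i = 1 ∧
              (g : Matrix (Fin 4) (Fin 4) ℂ) j j = 1) ∧
            (g : Matrix (Fin 4) (Fin 4) ℂ) = Matrix.diagonal v := by
        refine ⟨_, ⟨_, congrArg diagonalUnits (hf k e j)⟩, ?_, ⟨i, i', hii', ?_, ?_⟩, ?_⟩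
        · intro h
          rw [map_eq_one_iff _ diagonalUnits_injective] at h
          rw [h] at hv
          have h1 : (1 : ℂ) = -1 := by rw [← hl, ← hv]; rfl
          norm_num at h1
        · rw [coe_diagonalUnits, hv, Matrix.diagonal_apply_eq, hi]
        · rw [coe_diagonalUnits, hv, Matrix.diagonal_apply_eq, hi']
        · rw [coe_diagonalUnits, hv]
      rintro (rfl | rfl | rfl | rfl | rfl | rfl)
      · refine hmem 0 1 0 _ ?_ 2 3 (by decide) rfl rfl 0 rfl
        ext l
        simp only [Units.val_mul]
        fin_cases l <;> simp [ht]
      · refine hmem (2 * b) 1 0 _ ?_ 0 1 (by decide) rfl rfl 2 rfl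
        ext l
        simp only [Units.val_mul, hw]
        fin_cases l <;> simp [ht]
      · refine hmem 0 0 1 _ ?_ 1 3 (by decide) rfl rfl 0 rfl
        ext l
        simp only [Units.val_mul]
        fin_cases l <;> simp [hu]
      · refine hmem (2 * b) 0 1 _ ?_ 0 2 (by decide) rfl rfl 1 rfl
        ext l
        simp only [Units.val_mul, hw]
        fin_cases l <;> simp [hu]
      · refine hmem (2 * b) 1 1 _ ?_ 1 2 (by decide) rfl rfl 0 rfl
        ext l
        simp only [Units.val_mul, hw]
        fin_cases l <;> simp [ht, hu]
      · refine hmem 0 1 1 _ ?_ 0 3 (by decide) rfl rfl 1 rfl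
        ext l
        simp only [Units.val_mul]
        fin_cases l <;> simp [ht, hu]
end
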